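/- Let l ∈ {3,4}. Let V be a finite-dimensional real inner product space and Δ⁺ a finite set of nonzero vectors of V such that whenever α, α' ∈ Δ⁺ and α' = c·α for some real number c, then c ∈ {1, 2, 1/2}. Fix w ∈ V, and for each α ∈ Δ⁺ let Θ̂_α be a nonempty finite multiset of real numbers with θ − ⟨α,w⟩ ∈ (π/l)ℤ for every θ ∈ Θ̂_α, such that the cardinality (with multiplicity) of Θ̂_α is strictly greater than that of Θ̂_{2α} whenever both α and 2α lie in Δ⁺. Let Θ_α be the submultiset of Θ̂_α consisting of the elements that are not integer multiples of π/2. Assume that the multiset of vectors {cot(θ)·α : α ∈ Δ⁺, θ ∈ Θ_α} (with multiplicities) is negation-invariant. Then for every nonzero v ∈ V, the total number (with multiplicity) of pairs (α,θ) with α ∈ Δ⁺, θ ∈ Θ_α for which there exists an integer m with (θ+mπ)⁻¹·α = v equals the total number of such pairs for which there exists an integer m with (θ+mπ)⁻¹·α = −v. -/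

import Mathlib

open Real
open scoped Classical RealInnerProductSpace

/-- The submultiset of a multiset of reals consisting of those elements that are not
integer multiples of `π/2`. -/
noncomputable def notHalfPiMultiples (Θ : Multiset ℝ) : Multiset ℝ :=
  Θ.filter (fun θ => ¬ ∃ k : ℤ, θ = k * (π / 2))

theorem aux_nhp {A : Multiset ℝ} {θ : ℝ} (h : θ ∈ notHalfPiMultiples A) :
    θ ∈ A ∧ sin θ ≠ 0 ∧ cos θ ≠ 0 := by
  unfold notHalfPiMultiples at h
  rw [Multiset.mem_filter] at h
  refine ⟨h.1, fun hs => h.2 ?_, fun hc => h.2 ?_⟩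
  · obtain ⟨n, hn⟩ := Real.sin_eq_zero_iff.1 hs
    exact ⟨2 * n, by rw [← hn]; push_cast; ring⟩
  · obtain ⟨n, hn⟩ := Real.cos_eq_zero_iff.1 hc
    exact ⟨2 * n + 1, by rw [hn]; push_cast; ring⟩

theorem aux_trig (l : ℕ) (hl : l = 3 ∨ l = 4) (x y : ℝ)
    (hx : sin (2 * l * x) = 0) (hy : sin (l * y) = 0)
    (hxs : sin x ≠ 0) (hxc : cos x ≠ 0) (hys : sin y ≠ 0) (hyc : cos y ≠ 0)
    (h : (cot x) ^ 2 = (2 * cot y) ^ 2) : False := by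
  rw [Real.cot_eq_cos_div_sin, Real.cot_eq_cos_div_sin] at h
  field_simp at h
  have px := sin_sq_add_cos_sq x
  have py := sin_sq_add_cos_sq y
  rcases hl with rfl | rfl
  · push_cast at hx hy
    rw [Real.sin_three_mul] at hy
    have hy2 : sin y ^ 2 = 3 / 4 := by
      have : sin y * (3 - 4 * sin y ^ 2) = 0 := by linarith
      rcases mul_eq_zero.1 this with h | h
      · exact absurd h hys
      · linarith
    rw [show (2 * 3 * x : ℝ) = 2 * (3 * x) by ring, Real.sin_two_mul, Real.sin_three_mul,
      Real.cos_three_mul] at hx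
    have : (sin x * cos x) * ((3 - 4 * sin x ^ 2) * (4 * cos x ^ 2 - 3)) = 0 := by linarith
    have hy3 : cos y ^ 2 = 1 / 4 := by linarith
    rw [hy2, hy3] at h
    rcases mul_eq_zero.1 this with h' | h'
    · exact mul_ne_zero hxs hxc h'
    · rcases mul_eq_zero.1 h' with h' | h' <;> linarith
  · push_cast at hx hy
    rw [show (4 * y : ℝ) = 2 * (2 * y) by ring, Real.sin_two_mul, Real.sin_two_mul,
      Real.cos_two_mul] at hy
    have hy2 : cos y ^ 2 = 1 / 2 := by
      have : (sin y * cos y) * (2 * cos y ^ 2 - 1) = 0 := by linarith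
      rcases mul_eq_zero.1 this with h | h
      · exact absurd h (mul_ne_zero hys hyc)
      · linarith
    have hy3 : sin y ^ 2 = 1 / 2 := by linarith
    rw [hy2, hy3] at h
    have hc : cos x ^ 2 = 4 / 5 := by linarith
    rw [show (2 * 4 * x : ℝ) = 2 * (2 * (2 * x)) by ring, Real.sin_two_mul, Real.sin_two_mul,
      Real.cos_two_mul (2 * x), Real.sin_two_mul, Real.cos_two_mul, hc] at hx
    have : sin x * cos x = 0 := by linarith
    exact mul_ne_zero hxs hxc this

theorem aux_cot {x y : ℝ} (hx : sin x ≠ 0) (hy : sin y ≠ 0) :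
    cot x = cot y ↔ ∃ m : ℤ, x + m * π = y := by
  rw [Real.cot_eq_cos_div_sin, Real.cot_eq_cos_div_sin, div_eq_div_iff hx hy]
  have : cos x * sin y = cos y * sin x ↔ sin (y - x) = 0 := by
    rw [Real.sin_sub]
    constructor <;> intro h <;> linarith
  rw [this, Real.sin_eq_zero_iff]
  constructor <;> rintro ⟨n, hn⟩ <;> exact ⟨n, by linarith⟩

theorem aux_cot_neg (x : ℝ) : cot (-x) = - cot x := by
  rw [Real.cot_eq_cos_div_sin, Real.cot_eq_cos_div_sin, cos_neg, sin_neg, div_neg]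

theorem aux_pair (l : ℕ) (hl : l = 3 ∨ l = 4) (s : ℝ) (A B : Multiset ℝ)
    (hA : ∀ θ ∈ A, ∃ k : ℤ, θ - s = k * (π / l))
    (hB : ∀ θ ∈ B, ∃ k : ℤ, θ - 2 * s = k * (π / l))
    (hcard : Multiset.card B < Multiset.card A)
    (h : ∀ c : ℝ, c ≠ 0 →
      ((notHalfPiMultiples A).map cot).count c
        + ((notHalfPiMultiples B).map (fun θ => 2 * cot θ)).count c =
      ((notHalfPiMultiples A).map cot).count (-c)
        + ((notHalfPiMultiples B).map (fun θ => 2 * cot θ)).count (-c)) (c : ℝ) (hc : c ≠ 0) :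
    ((notHalfPiMultiples A).map cot).count c = ((notHalfPiMultiples A).map cot).count (-c) := by
  have hl0 : (l : ℝ) ≠ 0 := by rcases hl with rfl | rfl <;> norm_num
  by_cases hs : ∃ k : ℤ, 2 * s = k * (π / l)
  · obtain ⟨k, hk⟩ := hs
    have key : ∀ d e : ℝ, d ∈ (notHalfPiMultiples A).map cot →
        e ∈ (notHalfPiMultiples B).map (fun θ => 2 * cot θ) → d ^ 2 = e ^ 2 → False := by
      intro d e hd he hde
      obtain ⟨x, hx, rfl⟩ := Multiset.mem_map.1 hd
      obtain ⟨y, hy, rfl⟩ := Multiset.mem_map.1 he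
      obtain ⟨hx, hxs, hxc⟩ := aux_nhp hx
      obtain ⟨hy, hys, hyc⟩ := aux_nhp hy
      obtain ⟨i, hi⟩ := hA x hx
      obtain ⟨j, hj⟩ := hB y hy
      refine aux_trig l hl x y ?_ ?_ hxs hxc hys hyc hde
      · rw [Real.sin_eq_zero_iff]
        refine ⟨2 * i + k, ?_⟩
        have : 2 * x = 2 * i * (π / l) + k * (π / l) := by linarith
        rw [show 2 * (l : ℝ) * x = l * (2 * x) by ring, this]
        push_cast
        field_simp
      · rw [Real.sin_eq_zero_iff]
        refine ⟨j + k, ?_⟩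
        have : y = j * (π / l) + k * (π / l) := by linarith
        rw [this]
        push_cast
        field_simp
    have hh := h c hc
    by_cases hm : c ∈ (notHalfPiMultiples A).map cot ∨ -c ∈ (notHalfPiMultiples A).map cot
    · have h1 : c ∉ (notHalfPiMultiples B).map (fun θ => 2 * cot θ) := by
        intro h1
        rcases hm with hm | hm
        · exact key _ _ hm h1 rfl
        · exact key _ _ hm h1 (by ring)
      have h2 : -c ∉ (notHalfPiMultiples B).map (fun θ => 2 * cot θ) := by
        intro h1
        rcases hm with hm | hm
        · exact key _ _ hm h1 (by ring)
        · exact key _ _ hm h1 rfl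
      rw [Multiset.count_eq_zero_of_notMem h1, Multiset.count_eq_zero_of_notMem h2] at hh
      simpa using hh
    · push Not at hm
      rw [Multiset.count_eq_zero_of_notMem hm.1, Multiset.count_eq_zero_of_notMem hm.2]
  · exfalso
    have hAA : notHalfPiMultiples A = A := by
      unfold notHalfPiMultiples
      rw [Multiset.filter_eq_self]
      rintro θ hθ ⟨k, hk⟩
      obtain ⟨j, hj⟩ := hA θ hθ
      refine hs ⟨k * l - 2 * j, ?_⟩
      have : 2 * s = k * π - 2 * (j * (π / l)) := by linarith
      rw [this]
      push_cast
      field_simp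
    have hneg : ∀ d ∈ (notHalfPiMultiples A).map cot,
        -d ∉ (notHalfPiMultiples A).map cot := by
      intro d hd hd'
      obtain ⟨x, hx, rfl⟩ := Multiset.mem_map.1 hd
      obtain ⟨y, hy, hxy⟩ := Multiset.mem_map.1 hd'
      obtain ⟨hx, hxs, hxc⟩ := aux_nhp hx
      obtain ⟨hy, hys, hyc⟩ := aux_nhp hy
      obtain ⟨i, hi⟩ := hA x hx
      obtain ⟨j, hj⟩ := hA y hy
      rw [← aux_cot_neg, aux_cot hys (by simpa using hxs)] at hxy
      obtain ⟨m, hm⟩ := hxy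
      refine hs ⟨- m * l - i - j, ?_⟩
      have : 2 * s = - m * π - i * (π / l) - j * (π / l) := by linarith
      rw [this]
      push_cast
      field_simp
    have hle : (notHalfPiMultiples A).map cot ≤
        ((notHalfPiMultiples B).map (fun θ => 2 * cot θ)).map (fun d => -d) := by
      rw [Multiset.le_iff_count]
      intro d
      by_cases hd : d ∈ (notHalfPiMultiples A).map cot
      · have hd0 : d ≠ 0 := by
          rintro rfl
          exact hneg 0 hd (by simpa using hd)
        have hh := h d hd0
        rw [Multiset.count_eq_zero_of_notMem (hneg d hd)] at hh
        have := Multiset.count_map_eq_count' (fun d : ℝ => -d)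
          ((notHalfPiMultiples B).map (fun θ => 2 * cot θ)) neg_injective (-d)
        simp only [neg_neg] at this
        rw [this]
        omega
      · rw [Multiset.count_eq_zero_of_notMem hd]
        exact Nat.zero_le _
    have h1 := Multiset.card_le_card hle
    simp only [Multiset.card_map] at h1
    rw [hAA] at h1
    have h2 : Multiset.card (notHalfPiMultiples B) ≤ Multiset.card B :=
      Multiset.card_le_card (Multiset.filter_le _ _)
    omega

theorem aux_count {V : Type*} [NormedAddCommGroup V] [InnerProductSpace ℝ V]
    (A : Multiset ℝ) (f : ℝ → ℝ) (α : V) (hα : α ≠ 0) (c : ℝ) :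
    (A.map (fun θ => f θ • α)).count (c • α) = (A.map f).count c := by
  rw [← Multiset.count_map_eq_count' (fun x : ℝ => x • α) (A.map f)
    (smul_left_injective ℝ hα) c, Multiset.map_map]
  rfl

theorem aux_final {V : Type*} [NormedAddCommGroup V] [InnerProductSpace ℝ V]
    (A : Multiset ℝ) (α : V) (hα : α ≠ 0)
    (h : ∀ c : ℝ, c ≠ 0 → ((notHalfPiMultiples A).map cot).count c =
      ((notHalfPiMultiples A).map cot).count (-c)) (v : V) (hv : v ≠ 0) :
    (notHalfPiMultiples A).countP (fun θ => ∃ m : ℤ, (θ + m * π)⁻¹ • α = v) =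
    (notHalfPiMultiples A).countP (fun θ => ∃ m : ℤ, (θ + m * π)⁻¹ • α = -v) := by
  by_cases hx : ∃ x : ℝ, x • α = v
  · obtain ⟨x, rfl⟩ := hx
    have gen : ∀ x : ℝ, ∀ θ : ℝ, (∃ m : ℤ, (θ + m * π)⁻¹ • α = x • α) ↔
        ∃ m : ℤ, θ + m * π = x⁻¹ := by
      intro x θ
      refine exists_congr fun m => ?_
      rw [(smul_left_injective ℝ hα).eq_iff, inv_eq_iff_eq_inv]
    simp only [← neg_smul, gen]
    by_cases hs : sin x⁻¹ = 0
    · have z : ∀ y : ℝ, sin y = 0 → (notHalfPiMultiples A).countP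
          (fun θ => ∃ m : ℤ, θ + m * π = y) = 0 := by
        intro y hy
        rw [Multiset.countP_eq_zero]
        rintro θ hθ ⟨m, hm⟩
        apply (aux_nhp hθ).2.1
        obtain ⟨n, hn⟩ := Real.sin_eq_zero_iff.1 hy
        rw [Real.sin_eq_zero_iff]
        exact ⟨n - m, by push_cast; linarith⟩
      rw [z _ hs, z _ (by rw [inv_neg, sin_neg, hs, neg_zero])]
    · have z : ∀ y : ℝ, sin y ≠ 0 → (notHalfPiMultiples A).countP
          (fun θ => ∃ m : ℤ, θ + m * π = y) = ((notHalfPiMultiples A).map cot).count (cot y) := by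
        intro y hy
        rw [Multiset.count, Multiset.countP_map, ← Multiset.countP_eq_card_filter]
        refine Multiset.countP_congr rfl fun θ hθ => ?_
        rw [← aux_cot (aux_nhp hθ).2.1 hy]
        exact propext eq_comm
      rw [z _ hs, z _ (by rw [inv_neg, sin_neg]; simpa using hs), inv_neg, aux_cot_neg]
      by_cases hc : cot x⁻¹ = 0
      · rw [hc, neg_zero]
      · exact h _ hc
  · push Not at hx
    rw [Multiset.countP_eq_zero.2, Multiset.countP_eq_zero.2]
    · rintro θ _ ⟨m, hm⟩
      exact hx (-(θ + m * π)⁻¹) (by rw [neg_smul, hm, neg_neg])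
    · rintro θ _ ⟨m, hm⟩
      exact hx _ hm

/-- Combinatorial core of Theorem 7.6 (Theorem II(iii)). Let `l ∈ {3,4}`, `Δ` a finite
set of nonzero vectors in which proportional members differ by a factor `1`, `2` or
`1/2`, and for each `α ∈ Δ` let `Θ̂_α` be a nonempty finite multiset of reals with
`θ - ⟨α,w⟩ ∈ (π/l)ℤ`, whose cardinality strictly exceeds that of `Θ̂_{2α}` whenever
`α, 2α ∈ Δ`. Let `Θ_α ⊆ Θ̂_α` consist of the elements not in `(π/2)ℤ`. If the multiset
of vectors `cot θ • α` (`α ∈ Δ`, `θ ∈ Θ_α`) is negation-invariant, then for every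
nonzero `v` the count of pairs `(α, θ)` admitting an integer `m` with
`(θ+mπ)⁻¹ • α = v` equals the count of those with `(θ+mπ)⁻¹ • α = -v`. -/
theorem order_three_four_austere_implies_path_austere
    (l : ℕ) (hl : l = 3 ∨ l = 4)
    {V : Type*} [NormedAddCommGroup V] [InnerProductSpace ℝ V] [FiniteDimensional ℝ V]
    (Δ : Finset V) (hne : ∀ α ∈ Δ, α ≠ 0)
    (hsc : ∀ α ∈ Δ, ∀ α' ∈ Δ, ∀ c : ℝ, α' = c • α →
      c = 1 ∨ c = 2 ∨ c = 1 / 2)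
    (w : V) (Θhat : V → Multiset ℝ)
    (hnonempty : ∀ α ∈ Δ, Θhat α ≠ 0)
    (hshift : ∀ α ∈ Δ, ∀ θ ∈ Θhat α, ∃ k : ℤ, θ - (⟪α, w⟫ : ℝ) = k * (π / l))
    (hcard : ∀ α ∈ Δ, (2 : ℝ) • α ∈ Δ →
      Multiset.card (Θhat ((2 : ℝ) • α)) < Multiset.card (Θhat α))
    (haustere :
      (∑ α ∈ Δ, (notHalfPiMultiples (Θhat α)).map (fun θ => Real.cot θ • α)).map
          (fun v => -v) =
        ∑ α ∈ Δ, (notHalfPiMultiples (Θhat α)).map (fun θ => Real.cot θ • α)) :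
    ∀ v : V, v ≠ 0 →
      (∑ α ∈ Δ, (notHalfPiMultiples (Θhat α)).countP
          (fun θ => ∃ m : ℤ, (θ + m * π)⁻¹ • α = v)) =
        ∑ α ∈ Δ, (notHalfPiMultiples (Θhat α)).countP
          (fun θ => ∃ m : ℤ, (θ + m * π)⁻¹ • α = -v) := by
  intro v hv
  set K : V → V → ℕ := fun β u =>
    ((notHalfPiMultiples (Θhat β)).map (fun θ => Real.cot θ • β)).count u with hK
  have tot : ∀ u : V, ∑ β ∈ Δ, K β u = ∑ β ∈ Δ, K β (-u) := by
    intro u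
    have h1 := Multiset.count_map_eq_count' (fun v : V => -v)
      (∑ α ∈ Δ, (notHalfPiMultiples (Θhat α)).map (fun θ => Real.cot θ • α)) neg_injective u
    rw [haustere, Multiset.count_sum', Multiset.count_sum'] at h1
    exact h1.symm
  have zero : ∀ β ∈ Δ, ∀ α ∈ Δ, ∀ c : ℝ, c ≠ 0 → β ≠ α → β ≠ (2 : ℝ) • α →
      β ≠ (1 / 2 : ℝ) • α → K β (c • α) = 0 := by
    intro β hβ α hα c hc h1 h2 h3
    apply Multiset.count_eq_zero_of_notMem
    intro hm
    obtain ⟨θ, -, hθ⟩ := Multiset.mem_map.1 hm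
    have h0 : Real.cot θ ≠ 0 := by
      intro h0
      rw [h0, zero_smul] at hθ
      exact smul_ne_zero hc (hne α hα) hθ.symm
    have hb : β = ((Real.cot θ)⁻¹ * c) • α := by
      rw [mul_smul, ← hθ, smul_smul, inv_mul_cancel₀ h0, one_smul]
    rcases hsc α hα β hβ _ hb with h | h | h <;> rw [h] at hb
    · exact h1 (by simpa using hb)
    · exact h2 hb
    · exact h3 hb
  -- the pair situation
  have pair : ∀ α ∈ Δ, (2 : ℝ) • α ∈ Δ → ∀ c : ℝ, c ≠ 0 →
      K α (c • α) = K α (-(c • α)) ∧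
      K ((2 : ℝ) • α) (c • α) = K ((2 : ℝ) • α) (-(c • α)) := by
    intro α hα h2α
    have hα0 := hne α hα
    have hne2 : α ≠ (2 : ℝ) • α := by
      intro h
      have : (1 : ℝ) • α = (2 : ℝ) • α := by rwa [one_smul]
      have := smul_left_injective ℝ hα0 this
      norm_num at this
    have hhalf : (1 / 2 : ℝ) • α ∉ Δ := by
      intro h
      have := hsc _ h _ h2α 4 (by rw [smul_smul]; norm_num)
      norm_num at this
    have sum2 : ∀ c : ℝ, c ≠ 0 → ∑ β ∈ Δ, K β (c • α) =
        K α (c • α) + K ((2 : ℝ) • α) (c • α) := by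
      intro c hc
      rw [← Finset.sum_pair (f := fun β => K β (c • α)) hne2]
      symm
      apply Finset.sum_subset
      · intro β hβ
        simp only [Finset.mem_insert, Finset.mem_singleton] at hβ
        rcases hβ with rfl | rfl <;> assumption
      · intro β hβ hβ'
        simp only [Finset.mem_insert, Finset.mem_singleton, not_or] at hβ'
        exact zero β hβ α hα c hc hβ'.1 hβ'.2 (fun h => hhalf (h ▸ hβ))
    have e1 : ∀ c : ℝ, K α (c • α) =
        ((notHalfPiMultiples (Θhat α)).map Real.cot).count c :=
      fun c => aux_count _ _ α hα0 c
    have e2 : ∀ c : ℝ, K ((2 : ℝ) • α) (c • α) =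
        ((notHalfPiMultiples (Θhat ((2 : ℝ) • α))).map (fun θ => 2 * Real.cot θ)).count c := by
      intro c
      rw [← aux_count _ _ α hα0 c]
      simp only [hK, smul_smul, mul_comm]
    have hsum : ∀ c : ℝ, c ≠ 0 → K α (c • α) + K ((2 : ℝ) • α) (c • α) =
        K α ((-c) • α) + K ((2 : ℝ) • α) ((-c) • α) := by
      intro c hc
      rw [← sum2 c hc, ← sum2 (-c) (neg_ne_zero.2 hc), neg_smul]
      exact tot _
    intro c hc
    have h1 : K α (c • α) = K α ((-c) • α) := by
      rw [e1, e1]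
      refine aux_pair l hl (⟪α, w⟫ : ℝ) (Θhat α) (Θhat ((2 : ℝ) • α)) (hshift α hα) ?_
        (hcard α hα h2α) ?_ c hc
      · intro θ hθ
        have := hshift _ h2α θ hθ
        rwa [real_inner_smul_left] at this
      · intro c hc
        rw [← e1, ← e2, ← e1, ← e2]
        exact hsum c hc
    have h2 := hsum c hc
    rw [← neg_smul]
    exact ⟨h1, by omega⟩
  have main : ∀ α ∈ Δ, ∀ c : ℝ, c ≠ 0 → K α (c • α) = K α (-(c • α)) := by
    intro α hα c hc
    by_cases h2 : (2 : ℝ) • α ∈ Δ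
    · exact (pair α hα h2 c hc).1
    by_cases h3 : (1 / 2 : ℝ) • α ∈ Δ
    · have e : (2 : ℝ) • (1 / 2 : ℝ) • α = α := by rw [smul_smul]; norm_num
      have := (pair _ h3 (by rwa [e]) (2 * c) (by simpa using hc)).2
      rw [e] at this
      have e' : (2 * c) • (1 / 2 : ℝ) • α = c • α := by rw [smul_smul]; congr 1; ring
      rwa [e'] at this
    · have sum1 : ∀ c : ℝ, c ≠ 0 → ∑ β ∈ Δ, K β (c • α) = K α (c • α) := by
        intro c hc
        apply Finset.sum_eq_single_of_mem α hα
        intro β hβ hβ'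
        exact zero β hβ α hα c hc hβ' (fun h => h2 (h ▸ hβ)) (fun h => h3 (h ▸ hβ))
      have := tot (c • α)
      rw [sum1 c hc, ← neg_smul, sum1 (-c) (neg_ne_zero.2 hc)] at this
      rwa [neg_smul] at this
  apply Finset.sum_congr rfl
  intro α hα
  refine aux_final _ α (hne α hα) ?_ v hv
  intro c hc
  have := main α hα c hc
  rw [← neg_smul] at this
  rw [← aux_count _ _ α (hne α hα), ← aux_count _ _ α (hne α hα)]
  exact this
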